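/- For every integer n ≥ 1 there exists a 2^n-periodic bisequence t : ℤ → {0,1} such that the 2^n blocks (t_j, t_{j+1}, …, t_{j+n−1}) for j = 1, 2, …, 2^n are pairwise distinct; equivalently, every block in {0,1}^n occurs exactly once among them. -/

import Mathlib

/-!
In the de Bruijn graph of words of length `n`, edges drop the first letter and append a last one,
and a `|α| ^ n`-periodic bisequence with distinct blocks is a Hamiltonian cycle. Rotation of words
is a permutation following the edges, hence a partition of the words into directed cycles. Two words
with the same tail have the same successors, so exchanging their images keeps the permutation along
edges, and it joins their cycles if these are different. Once no more cycles can be joined in this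
way, each cycle is closed under taking successors in the graph, so by strong connectedness there is
only one.
-/

open Equiv Equiv.Perm

section JoinCycles

variable {V : Type*}

theorem sameCycle_of_forall_sameCycle_apply {f g : Perm V} (h : ∀ a, g.SameCycle a (f a)) {a b : V}
    (hab : f.SameCycle a b) : g.SameCycle a b := by
  obtain ⟨i, rfl⟩ := hab
  induction i with
  | zero => exact .refl g a
  | succ i ih =>
    rw [add_comm, zpow_one_add, mul_apply]
    exact ih.trans (h _)
  | pred i ih =>
    refine ih.trans (SameCycle.symm ?_)
    simpa [← mul_apply, ← zpow_one_add] using h ((f ^ (-(i : ℤ) - 1)) a)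

variable [DecidableEq V] {f : Perm V} {x y : V}

theorem sameCycle_mul_swap_of_not_sameCycle (hy : y ∈ Function.periodicPts f)
    (h : ¬ f.SameCycle x y) : (f * swap x y).SameCycle x y := by
  -- Otherwise the `f`-orbit of `f y` meets neither `x` nor `y` as long as it stays in the new cycle
  -- of `x`, so it never leaves that cycle; but it returns to `y`.
  by_contra hxy
  have sameCycle_pow_succ (k : ℕ) : (f * swap x y).SameCycle x ((f ^ (k + 1)) y) := by
    induction k with
    | zero => simpa using (SameCycle.refl (f * swap x y) x).apply_right
    | succ k ih =>
      have ne_x : (f ^ (k + 1)) y ≠ x := fun hx =>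
        h (SameCycle.symm ⟨(k + 1 : ℕ), by rwa [zpow_natCast]⟩)
      have ne_y : (f ^ (k + 1)) y ≠ y := fun hy' => hxy (by rwa [hy'] at ih)
      rw [pow_succ', mul_apply, ← swap_apply_of_ne_of_ne ne_x ne_y, ← mul_apply]
      exact sameCycle_apply_right.2 ih
  obtain ⟨k, hk, hky⟩ := hy
  obtain ⟨k, rfl⟩ := Nat.exists_eq_add_one.2 hk
  have pow_apply_eq : (f ^ (k + 1)) y = y := by rwa [← iterate_eq_pow]
  exact hxy (by simpa only [pow_apply_eq] using sameCycle_pow_succ k)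

theorem sameCycle_mul_swap_of_sameCycle (hxy : (f * swap x y).SameCycle x y) {a b : V}
    (hab : f.SameCycle a b) : (f * swap x y).SameCycle a b := by
  have sameCycle_swap (c : V) : (f * swap x y).SameCycle c (swap x y c) := by
    rw [swap_apply_def]
    split_ifs with hx hy
    · exact hx ▸ hxy
    · exact hy ▸ hxy.symm
    · exact .refl _ c
  refine sameCycle_of_forall_sameCycle_apply (fun c => ?_) hab
  simpa using (sameCycle_swap c).apply_right

end JoinCycles

theorem exists_perm_sameCycle_of_apply_eq {V κ : Type*} [Finite V] (f : Perm V) (p : V → κ) :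
    ∃ σ : Perm V, (∀ v, p (σ v) = p v) ∧ ∀ x y, p x = p y → (f * σ).SameCycle x y := by
  classical
  obtain ⟨σ, hσ, hmax⟩ := (Set.toFinite {σ : Perm V | ∀ v, p (σ v) = p v}).exists_maximalFor
    (fun σ => SameCycle.setoid (f * σ)) _ ⟨1, fun _ => rfl⟩
  refine ⟨σ, hσ, fun x y hp => ?_⟩
  by_contra hxy
  have hswap : ∀ v, p ((σ * swap x y) v) = p v := by
    intro v
    rw [mul_apply, hσ, swap_apply_def]
    split_ifs with hx hy
    · rw [hx, hp]
    · rw [hy, hp]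
    · rfl
  have hjoin : (f * (σ * swap x y)).SameCycle x y := by
    rw [← mul_assoc]
    exact sameCycle_mul_swap_of_not_sameCycle ((f * σ).injective.mem_periodicPts y) hxy
  have hle : SameCycle.setoid (f * σ) ≤ SameCycle.setoid (f * (σ * swap x y)) := fun a b hab => by
    rw [← mul_assoc] at hjoin ⊢
    exact sameCycle_mul_swap_of_sameCycle hjoin hab
  exact hxy (hmax hswap hle hjoin)

section DeBruijn

variable {α : Type*} {n : ℕ}

/-- The block of length `n` of the bisequence `t` at position `j`. -/
def block (t : ℤ → α) (n : ℕ) (j : ℤ) : Fin n → α :=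
  fun k => t (j + (k : ℕ))

/-- The edge relation `v → w` of the de Bruijn graph on words of length `n + 1`: the word `w` arises
from `v` by deleting the first letter and appending a last one. -/
def DeBruijnAdj (v w : Fin (n + 1) → α) : Prop :=
  Fin.init w = Fin.tail v

theorem deBruijnAdj_block_add_one (t : ℤ → α) (j : ℤ) :
    DeBruijnAdj (block t (n + 1) j) (block t (n + 1) (j + 1)) := by
  funext k
  simp [Fin.init, Fin.tail, block, add_comm, add_left_comm]

theorem block_apply_zero_eq_of_deBruijnAdj {x : ℤ → Fin (n + 1) → α}
    (hx : ∀ j, DeBruijnAdj (x j) (x (j + 1))) (j : ℤ) :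
    block (fun i => x i 0) (n + 1) j = x j := by
  funext k
  induction k using Fin.induction generalizing j with
  | zero => simp [block]
  | succ k ih =>
    calc x (j + (k.succ : ℕ)) 0
      _ = x (j + 1 + (k.castSucc : ℕ)) 0 := by
        rw [Fin.val_succ, Fin.val_castSucc, Nat.cast_succ, add_assoc, add_comm (1 : ℤ)]
      _ = x (j + 1) k.castSucc := ih (j + 1)
      _ = x j k.succ := congrFun (hx j) k

theorem exists_block_eq_and_block_eq [Nonempty α] {m : ℕ} (v : Fin m → α) (w : Fin n → α) :
    ∃ t : ℤ → α, block t m 0 = v ∧ block t n m = w := by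
  let position : Fin (m + n) → ℤ := fun i => (i : ℕ)
  have hposition : Function.Injective position := Nat.cast_injective.comp Fin.val_injective
  refine ⟨Function.extend position (Fin.append v w) fun _ => Classical.arbitrary α,
    funext fun k => ?_, funext fun k => ?_⟩
  · have : 0 + ((k : ℕ) : ℤ) = position (k.castAdd n) := by simp [position]
    rw [block, this, hposition.extend_apply, Fin.append_left]
  · have : (m : ℤ) + (k : ℕ) = position (k.natAdd m) := by simp [position]
    rw [block, this, hposition.extend_apply, Fin.append_right]

theorem reflTransGen_deBruijnAdj (v w : Fin (n + 1) → α) :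
    Relation.ReflTransGen DeBruijnAdj v w := by
  have : Nonempty α := ⟨v 0⟩
  obtain ⟨t, rfl, rfl⟩ := exists_block_eq_and_block_eq v w
  have reaches (k : ℕ) :
      Relation.ReflTransGen DeBruijnAdj (block t (n + 1) 0) (block t (n + 1) k) := by
    induction k with
    | zero => exact .refl
    | succ k ih => exact ih.tail (by simpa using deBruijnAdj_block_add_one t k)
  exact reaches (n + 1)

theorem deBruijnAdj_comp_finRotate (v : Fin (n + 1) → α) :
    DeBruijnAdj v (v ∘ finRotate (n + 1)) := by
  funext k
  simp [Fin.init, Fin.tail]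

theorem exists_isCycleOn_univ_deBruijnAdj (α : Type*) [Finite α] (n : ℕ) :
    ∃ g : Perm (Fin (n + 1) → α), (∀ v, DeBruijnAdj v (g v)) ∧ g.IsCycleOn Set.univ := by
  let rotate : Perm (Fin (n + 1) → α) := (finRotate (n + 1)).symm.arrowCongr (.refl α)
  obtain ⟨σ, hσ, hcycle⟩ := exists_perm_sameCycle_of_apply_eq rotate Fin.tail
  have hadj (v) : DeBruijnAdj v ((rotate * σ) v) :=
    (deBruijnAdj_comp_finRotate (σ v)).trans (hσ v)
  have sameCycle_of_adj {v w} (h : DeBruijnAdj v w) : (rotate * σ).SameCycle v w := by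
    have htail : Fin.tail v = Fin.tail ((rotate * σ).symm w) := by
      rw [← h, ← hadj ((rotate * σ).symm w), apply_symm_apply]
    exact sameCycle_symm_apply_right.1 (hcycle _ _ htail)
  have sameCycle (v w) : (rotate * σ).SameCycle v w := by
    induction reflTransGen_deBruijnAdj v w with
    | refl => exact .refl _ v
    | tail _ h ih => exact ih.trans (sameCycle_of_adj h)
  exact ⟨rotate * σ, hadj, Set.bijOn_univ.2 (rotate * σ).bijective, fun v _ w _ => sameCycle v w⟩

theorem exists_forall_block_eq_block_iff_modEq (α : Type*) [Fintype α] [Nonempty α] (n : ℕ) :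
    ∃ t : ℤ → α, ∀ i j, block t (n + 1) i = block t (n + 1) j ↔
      i ≡ j [ZMOD (Fintype.card α ^ (n + 1) : ℕ)] := by
  classical
  obtain ⟨g, hadj, hcycle⟩ := exists_isCycleOn_univ_deBruijnAdj α n
  obtain ⟨v⟩ : Nonempty (Fin (n + 1) → α) := inferInstance
  have hblock := block_apply_zero_eq_of_deBruijnAdj (x := fun i => (g ^ i) v) fun j => by
    simpa only [add_comm j, zpow_one_add, mul_apply] using hadj ((g ^ j) v)
  refine ⟨fun i => (g ^ i) v 0, fun i j => ?_⟩
  rw [← Finset.coe_univ] at hcycle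
  simp only [hblock, hcycle.zpow_apply_eq_zpow_apply (Finset.mem_univ v), Finset.card_univ,
    Fintype.card_pi_const]

theorem stmt_7_general {α : Type*} [Fintype α] [Nonempty α] (n : ℕ) :
    ∃ t : ℤ → α, (∀ i, t (i + (Fintype.card α ^ n : ℕ)) = t i) ∧
      Function.Injective fun j : Fin (Fintype.card α ^ n) => block t n ((j : ℕ) + 1) := by
  cases n with
  | zero => exact ⟨fun _ => Classical.arbitrary α, fun _ => rfl,
      fun i j _ => Subsingleton.elim (α := Fin 1) i j⟩
  | succ n =>
    obtain ⟨t, ht⟩ := exists_forall_block_eq_block_iff_modEq α n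
    refine ⟨t, fun i => ?_, fun i j hij => ?_⟩
    · simpa [block] using congrFun ((ht _ i).2 Int.add_modEq_right) 0
    · have hmod := Int.ModEq.add_right_cancel' 1 ((ht _ _).1 hij)
      exact Fin.ext ((Int.natCast_modEq_iff.1 hmod).eq_of_lt_of_lt i.2 j.2)

end DeBruijn

/-- For every `n ≥ 1` there is a `2^n`-periodic bisequence `t : ℤ → Fin 2` whose
`n`-blocks at positions `1, 2, …, 2^n` are pairwise distinct (equivalently, every
block in `{0,1}^n` occurs exactly once among them). -/
theorem stmt_7 (n : ℕ) (hn : 1 ≤ n) :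
    ∃ t : ℤ → Fin 2, (∀ i : ℤ, t (i + (2 ^ n : ℕ)) = t i) ∧
      Function.Injective
        (fun j : Fin (2 ^ n) => (fun k : Fin n => t (((j : ℕ) : ℤ) + 1 + (k : ℕ)))) :=
  stmt_7_general n
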